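/- The abelianization map σ: (X*, 𝔑) → ([X], 𝔠) and the sorting map σ⁺: ([X], 𝔠) → (X*, 𝔑) are both order-preserving (monotone). Moreover, for every word p ∈ X*, it is never the case that σ⁺(σ(p)) <_𝔑 p; that is, the sorted version of p is never strictly below p in 𝔑. -/

import Mathlib

/-- A standard term order on the free monoid `X*` on the countable alphabet
`X = {x₁, x₂, …}`, whose words we represent as lists of positive integers
(the word `x_{i₁} ⋯ x_{i_d}` is the list `[i₁, …, i_d]`).  It is a strict
total order such that the empty word `1` is smallest, which is compatible
with two-sided multiplication (concatenation), and with `x₁ < x₂ < ⋯`. -/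
structure StdTermOrder where
  lt : List ℕ+ → List ℕ+ → Prop
  irrefl : ∀ a, ¬ lt a a
  trans : ∀ a b c, lt a b → lt b c → lt a c
  total : ∀ a b, a ≠ b → lt a b ∨ lt b a
  one_lt : ∀ t, t ≠ [] → lt [] t
  mul_lt : ∀ a b s t, lt s t → lt (a ++ s ++ b) (a ++ t ++ b)
  std : ∀ i j : ℕ+, i < j → lt [i] [j]

/-- The partial order `𝔑`, the intersection of all standard term orders:
`m ≤_𝔑 m'` iff `m ≤ m'` holds for every standard term order on `X*`. -/
def Nle (m m' : List ℕ+) : Prop := ∀ T : StdTermOrder, m = m' ∨ T.lt m m'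

/-- The strict version of `𝔑`. -/
def Nlt (m m' : List ℕ+) : Prop := Nle m m' ∧ m ≠ m'

/-- `m'` covers `m` in the partial order `𝔑`. -/
def NCovers (m m' : List ℕ+) : Prop :=
  Nlt m m' ∧ ∀ k, Nlt m k → ¬ Nlt k m'

/-- A standard term order on the free abelian monoid `[X]`, whose elements we
represent as finitely supported functions `ℕ+ →₀ ℕ` (exponent vectors): a
strict total order with `1` (i.e. `0`) smallest, compatible with
multiplication (addition of exponent vectors), and with `x₁ < x₂ < ⋯`. -/
structure CStdTermOrder where
  lt : (ℕ+ →₀ ℕ) → (ℕ+ →₀ ℕ) → Prop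
  irrefl : ∀ a, ¬ lt a a
  trans : ∀ a b c, lt a b → lt b c → lt a c
  total : ∀ a b, a ≠ b → lt a b ∨ lt b a
  one_lt : ∀ t, t ≠ 0 → lt 0 t
  mul_lt : ∀ t s s', lt s s' → lt (t + s) (t + s')
  std : ∀ i j : ℕ+, i < j → lt (Finsupp.single i 1) (Finsupp.single j 1)

/-- The partial order `𝔠` on `[X]`, the intersection of all standard term
orders on `[X]`. -/
def Cle (a b : ℕ+ →₀ ℕ) : Prop := ∀ T : CStdTermOrder, a = b ∨ T.lt a b

/-- The abelianization map `σ : X* → [X]`, recording for each `i` the number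
of occurrences of the letter `xᵢ`. -/
noncomputable def sigmaAb : List ℕ+ → (ℕ+ →₀ ℕ)
  | [] => 0
  | a :: t => Finsupp.single a 1 + sigmaAb t

/-- The sorting map `σ⁺ : [X] → X*`, sending `x₁^{a₁} ⋯ x_ℓ^{a_ℓ}` to the
weakly increasing word `x₁^{a₁} ⋯ x_ℓ^{a_ℓ}`. -/
def sigmaPlus (f : ℕ+ →₀ ℕ) : List ℕ+ :=
  (f.support.sort (· ≤ ·)).foldr (fun a l => List.replicate (f a) a ++ l) []

theorem toMultiset_sigmaAb (l : List ℕ+) : Finsupp.toMultiset (sigmaAb l) = (l : Multiset ℕ+) := by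
  induction l with
  | nil => simp [sigmaAb]
  | cons a t ih =>
    rw [sigmaAb, map_add, ih, Finsupp.toMultiset_single, one_smul, Multiset.singleton_add,
      Multiset.cons_coe]

theorem sigmaAb_append (l l' : List ℕ+) : sigmaAb (l ++ l') = sigmaAb l + sigmaAb l' := by
  induction l with
  | nil => simp [sigmaAb]
  | cons a t ih => simp [sigmaAb, ih, add_assoc]

theorem perm_of_sigmaAb_eq {l l' : List ℕ+} (h : sigmaAb l = sigmaAb l') : l.Perm l' := by
  rw [← Multiset.coe_eq_coe, ← toMultiset_sigmaAb, ← toMultiset_sigmaAb, h]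

theorem foldr_aux (f : ℕ+ →₀ ℕ) (L : List ℕ+) :
    ((L.foldr (fun a l => List.replicate (f a) a ++ l) [] : List ℕ+) : Multiset ℕ+)
      = (L.map (fun a => f a • ({a} : Multiset ℕ+))).sum := by
  induction L with
  | nil => simp
  | cons a t ih =>
    rw [List.foldr_cons, ← Multiset.coe_add, ih, List.map_cons, List.sum_cons,
      Multiset.nsmul_singleton, Multiset.coe_replicate]

theorem coe_sigmaPlus (f : ℕ+ →₀ ℕ) : (sigmaPlus f : Multiset ℕ+) = Finsupp.toMultiset f := by
  rw [sigmaPlus, foldr_aux, Finsupp.toMultiset_apply, Finsupp.sum, Finset.sum_eq_multiset_sum,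
    ← Finset.sort_eq f.support (· ≤ ·), Multiset.map_coe, Multiset.sum_coe]

theorem foldr_sorted (f : ℕ+ →₀ ℕ) (L : List ℕ+) (hL : L.Pairwise (· ≤ ·)) :
    (L.foldr (fun a l => List.replicate (f a) a ++ l) []).Pairwise (· ≤ ·) ∧
    ∀ x ∈ L.foldr (fun a l => List.replicate (f a) a ++ l) [], x ∈ L := by
  induction L with
  | nil => simp
  | cons a t ih =>
    rw [List.pairwise_cons] at hL
    obtain ⟨h1, h2⟩ := ih hL.2
    rw [List.foldr_cons]
    refine ⟨?_, ?_⟩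
    · rw [List.pairwise_append]
      refine ⟨?_, h1, ?_⟩
      · rw [List.pairwise_replicate]; right; exact le_refl _
      · intro x hx y hy
        rw [List.eq_of_mem_replicate hx]
        exact hL.1 _ (h2 y hy)
    · intro x hx
      rw [List.mem_append] at hx
      rcases hx with hx | hx
      · rw [List.eq_of_mem_replicate hx]; exact List.mem_cons_self
      · exact List.mem_cons_of_mem _ (h2 x hx)

theorem sigmaPlus_sorted (f : ℕ+ →₀ ℕ) : (sigmaPlus f).Pairwise (· ≤ ·) :=
  (foldr_sorted f _ (Finset.pairwise_sort _ _)).1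

/-- A basic commutative standard term order: colexicographic. -/
def baseOrder : CStdTermOrder where
  lt a b := ∃ i, (∀ j, i < j → a j = b j) ∧ a i < b i
  irrefl := by
    rintro a ⟨i, -, h⟩
    exact lt_irrefl _ h
  trans := by
    rintro a b c ⟨i, hi, hi'⟩ ⟨j, hj, hj'⟩
    rcases lt_trichotomy i j with h | h | h
    · exact ⟨j, fun k hk => (hi k (h.trans hk)).trans (hj k hk), by rw [hi j h]; exact hj'⟩
    · subst h
      exact ⟨i, fun k hk => (hi k hk).trans (hj k hk), hi'.trans hj'⟩
    · exact ⟨i, fun k hk => (hi k hk).trans (hj k (h.trans hk)), by rw [← hj i h]; exact hi'⟩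
  total := by
    intro a b hab
    let S := (a.support ∪ b.support).filter (fun i => a i ≠ b i)
    have hmem : ∀ i, a i ≠ b i → i ∈ S := by
      intro i hi
      simp only [S, Finset.mem_filter, Finset.mem_union, Finsupp.mem_support_iff]
      refine ⟨?_, hi⟩
      by_contra h
      push Not at h
      exact hi (h.1.trans h.2.symm)
    have hne : S.Nonempty := by
      by_contra h
      apply hab
      ext i
      by_contra hi
      exact h ⟨i, hmem i hi⟩
    have h1 := S.max'_mem hne
    have h2 : a (S.max' hne) ≠ b (S.max' hne) := (Finset.mem_filter.mp h1).2
    have h3 : ∀ j, S.max' hne < j → a j = b j := by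
      intro j hj
      by_contra h
      exact absurd (S.le_max' j (hmem j h)) (not_le.mpr hj)
    rcases lt_or_gt_of_ne h2 with h | h
    · exact Or.inl ⟨_, h3, h⟩
    · exact Or.inr ⟨_, fun j hj => (h3 j hj).symm, h⟩
  one_lt := by
    intro t ht
    have hne : t.support.Nonempty := Finsupp.support_nonempty_iff.mpr ht
    refine ⟨t.support.max' hne, ?_, ?_⟩
    · intro j hj
      by_contra h
      have : j ∈ t.support := Finsupp.mem_support_iff.mpr (fun h' => h (by simp [h']))
      exact absurd (t.support.le_max' j this) (not_le.mpr hj)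
    · have := Finsupp.mem_support_iff.mp (t.support.max'_mem hne)
      exact Nat.pos_of_ne_zero this
  mul_lt := by
    rintro t s s' ⟨i, h, h'⟩
    exact ⟨i, fun j hj => by simp [h j hj], by simpa using h'⟩
  std := by
    intro i j hij
    refine ⟨j, ?_, ?_⟩
    · intro k hk
      rw [Finsupp.single_eq_of_ne (hij.trans hk).ne', Finsupp.single_eq_of_ne hk.ne']
    · rw [Finsupp.single_eq_of_ne hij.ne', Finsupp.single_eq_same]
      exact one_pos

/-- Number of letters (with multiplicity) of index at least `k`. -/
noncomputable def tailW (k : ℕ+) (a : ℕ+ →₀ ℕ) : ℕ :=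
  (Finsupp.toMultiset a).countP (fun i => k ≤ i)

theorem tailW_add (k : ℕ+) (a b : ℕ+ →₀ ℕ) : tailW k (a + b) = tailW k a + tailW k b := by
  simp [tailW]

theorem tailW_zero (k : ℕ+) : tailW k 0 = 0 := by
  simp [tailW]

theorem tailW_single (k i : ℕ+) : tailW k (Finsupp.single i 1) = if k ≤ i then 1 else 0 := by
  rw [tailW, Finsupp.toMultiset_single, one_smul, ← Multiset.cons_zero, Multiset.countP_cons]
  simp

/-- Order first by `tailW k`, then by the base order. -/
def tailOrder (k : ℕ+) : CStdTermOrder where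
  lt a b := tailW k a < tailW k b ∨ tailW k a = tailW k b ∧ baseOrder.lt a b
  irrefl := by
    rintro a (h | ⟨-, h⟩)
    · exact lt_irrefl _ h
    · exact baseOrder.irrefl _ h
  trans := by
    rintro a b c (h | ⟨h, h'⟩) (g | ⟨g, g'⟩)
    · exact Or.inl (h.trans g)
    · exact Or.inl (g ▸ h)
    · exact Or.inl (h ▸ g)
    · exact Or.inr ⟨h.trans g, baseOrder.trans _ _ _ h' g'⟩
  total := by
    intro a b hab
    rcases lt_trichotomy (tailW k a) (tailW k b) with h | h | h
    · exact Or.inl (Or.inl h)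
    · rcases baseOrder.total a b hab with g | g
      · exact Or.inl (Or.inr ⟨h, g⟩)
      · exact Or.inr (Or.inr ⟨h.symm, g⟩)
    · exact Or.inr (Or.inl h)
  one_lt := by
    intro t ht
    rw [tailW_zero]
    rcases Nat.eq_zero_or_pos (tailW k t) with h | h
    · exact Or.inr ⟨h.symm, baseOrder.one_lt t ht⟩
    · exact Or.inl h
  mul_lt := by
    intro t s s' h
    rw [tailW_add, tailW_add]
    rcases h with h | ⟨h, h'⟩
    · exact Or.inl (by omega)
    · exact Or.inr ⟨by omega, baseOrder.mul_lt _ _ _ h'⟩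
  std := by
    intro i j hij
    have hb := baseOrder.std i j hij
    rw [tailW_single, tailW_single]
    by_cases h1 : k ≤ i
    · have h2 : k ≤ j := h1.trans hij.le
      simp [h1, h2, hb]
    · by_cases h2 : k ≤ j <;> simp [h1, h2, hb]

theorem tailW_le_of_Cle {a b : ℕ+ →₀ ℕ} (h : Cle a b) (k : ℕ+) : tailW k a ≤ tailW k b := by
  rcases h (tailOrder k) with h | h | h
  · rw [h]
  · exact h.le
  · exact h.1.le

theorem revLex_append {s t : List ℕ+} (a b : List ℕ+) (hl : s.length = t.length) (h : s < t) :
    a ++ s ++ b < a ++ t ++ b := by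
  induction a with
  | cons x a ih => 
    rw [List.cons_append, List.cons_append, List.cons_append, List.cons_append, List.cons_lt_cons_iff]
    exact Or.inr ⟨rfl, ih⟩
  | nil =>
    simp only [List.nil_append]
    induction s generalizing t with
    | nil => 
      cases t with
      | nil => exact absurd h (lt_irrefl _)
      | cons y t => simp at hl
    | cons x s ih =>
      cases t with
      | nil => simp at hl
      | cons y t =>
        rw [List.cons_append, List.cons_append, List.cons_lt_cons_iff]
        rw [List.cons_lt_cons_iff] at h
        rcases h with h | ⟨h, h'⟩
        · exact Or.inl h
        · exact Or.inr ⟨h, ih (by simpa using hl) h'⟩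

/-- The noncommutative order obtained from a commutative one, ties broken by
reversed lexicographic order. -/
def liftOrder (T : CStdTermOrder) : StdTermOrder where
  lt s t := T.lt (sigmaAb s) (sigmaAb t) ∨ sigmaAb s = sigmaAb t ∧ t < s
  irrefl := by
    rintro a (h | ⟨-, h⟩)
    · exact T.irrefl _ h
    · exact lt_irrefl _ h
  trans := by
    rintro a b c (h | ⟨h, h'⟩) (g | ⟨g, g'⟩)
    · exact Or.inl (T.trans _ _ _ h g)
    · exact Or.inl (g ▸ h)
    · exact Or.inl (h ▸ g)
    · exact Or.inr ⟨h.trans g, g'.trans h'⟩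
  total := by
    intro a b hab
    by_cases h : sigmaAb a = sigmaAb b
    · rcases lt_or_gt_of_ne hab with g | g
      · exact Or.inr (Or.inr ⟨h.symm, g⟩)
      · exact Or.inl (Or.inr ⟨h, g⟩)
    · rcases T.total _ _ h with g | g
      · exact Or.inl (Or.inl g)
      · exact Or.inr (Or.inl g)
  one_lt := by
    intro t ht
    refine Or.inl (T.one_lt _ ?_)
    intro h
    have : sigmaAb t = sigmaAb [] := h
    exact ht (perm_of_sigmaAb_eq this).eq_nil
  mul_lt := by
    intro a b s t h
    have key : ∀ u, sigmaAb (a ++ u ++ b) = (sigmaAb a + sigmaAb b) + sigmaAb u := by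
      intro u
      rw [sigmaAb_append, sigmaAb_append, add_right_comm]
    rw [key, key]
    rcases h with h | ⟨h, h'⟩
    · exact Or.inl (T.mul_lt _ _ _ h)
    · exact Or.inr ⟨by rw [h], revLex_append a b (perm_of_sigmaAb_eq h).length_eq.symm h'⟩
  std := by
    intro i j hij
    left
    simpa [sigmaAb] using T.std i j hij

theorem sorted_not_gt {s p : List ℕ+} (hs : s.Pairwise (· ≤ ·)) (h : s.Perm p) : ¬ p < s := by
  induction s generalizing p with
  | nil => rw [h.symm.eq_nil]; exact lt_irrefl _
  | cons x s ih =>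
    cases p with
    | nil => exact absurd h.eq_nil (by simp)
    | cons y p =>
      rw [List.pairwise_cons] at hs
      rw [List.cons_lt_cons_iff]
      rintro (g | ⟨rfl, g⟩)
      · have hy : y ∈ x :: s := h.symm.subset List.mem_cons_self
        rcases List.mem_cons.mp hy with hy | hy
        · exact absurd g (hy ▸ lt_irrefl _)
        · exact absurd (hs.1 y hy) (not_le.mpr g)
      · exact ih hs.2 ((List.perm_cons y).mp h) g

theorem le_append (T : StdTermOrder) {s t : List ℕ+} {x y : ℕ+} (h : s = t ∨ T.lt s t)
    (hxy : x ≤ y) : s ++ [x] = t ++ [y] ∨ T.lt (s ++ [x]) (t ++ [y]) := by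
  have h1 : s ++ [x] = t ++ [x] ∨ T.lt (s ++ [x]) (t ++ [x]) := by
    rcases h with h | h
    · left; rw [h]
    · right; simpa using T.mul_lt [] [x] _ _ h
  have h2 : t ++ [x] = t ++ [y] ∨ T.lt (t ++ [x]) (t ++ [y]) := by
    rcases hxy.eq_or_lt with h | h
    · left; rw [h]
    · right; simpa using T.mul_lt t [] _ _ (T.std x y h)
  rcases h1 with h1 | h1
  · rw [h1]; exact h2
  · rcases h2 with h2 | h2
    · rw [← h2]; exact Or.inr h1
    · exact Or.inr (T.trans _ _ _ h1 h2)

theorem dominated_le (T : StdTermOrder) (l l' : List ℕ+) (hl : l.Pairwise (· ≥ ·))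
    (hl' : l'.Pairwise (· ≥ ·))
    (h : ∀ k : ℕ+, l.countP (fun i => k ≤ i) ≤ l'.countP (fun i => k ≤ i)) :
    l.reverse = l'.reverse ∨ T.lt l.reverse l'.reverse := by
  induction l generalizing l' with
  | nil =>
    by_cases hn : l' = []
    · left; rw [hn]
    · right; exact T.one_lt _ (by simpa using hn)
  | cons x t ih =>
    rw [List.pairwise_cons] at hl
    have hx : 0 < l'.countP (fun i => x ≤ i) :=
      lt_of_lt_of_le (List.countP_pos_iff.mpr ⟨x, List.mem_cons_self, by simp⟩) (h x)
    obtain ⟨z, hz, hxz⟩ := List.countP_pos_iff.mp hx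
    have hxz : x ≤ z := by simpa using hxz
    cases l' with
    | nil => simp at hz
    | cons y t' =>
      rw [List.pairwise_cons] at hl'
      have hxy : x ≤ y := by
        rcases List.mem_cons.mp hz with e | hz
        · exact e ▸ hxz
        · exact hxz.trans (hl'.1 z hz)
      rw [List.reverse_cons, List.reverse_cons]
      refine le_append T (ih t' hl.2 hl'.2 ?_) hxy
      intro k
      by_cases hk : k ≤ x
      · have := h k
        have hk' := hk.trans hxy
        simpa [List.countP_cons, hk, hk'] using this
      · have : t.countP (fun i => k ≤ i) = 0 := by
          rw [List.countP_eq_zero]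
          intro a ha
          have := (hl.1 a ha)
          simp only [decide_eq_true_eq]
          exact fun hka => hk (hka.trans this)
        omega

/-- `σ` and `σ⁺` are monotone with respect to `𝔑` and `𝔠`, and the sorted
version `σ⁺(σ(p))` of a word `p` is never strictly below `p` in `𝔑`. -/
theorem stmt14 :
    (∀ m m' : List ℕ+, Nle m m' → Cle (sigmaAb m) (sigmaAb m')) ∧
    (∀ a b : ℕ+ →₀ ℕ, Cle a b → Nle (sigmaPlus a) (sigmaPlus b)) ∧
    (∀ p : List ℕ+, ¬ Nlt (sigmaPlus (sigmaAb p)) p) := by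
  refine ⟨?_, ?_, ?_⟩
  · intro m m' h T
    rcases h (liftOrder T) with h | h | h
    · left; rw [h]
    · exact Or.inr h
    · exact Or.inl h.1
  · intro a b h T
    have := dominated_le T (sigmaPlus a).reverse (sigmaPlus b).reverse
      (List.pairwise_reverse.mpr (sigmaPlus_sorted a))
      (List.pairwise_reverse.mpr (sigmaPlus_sorted b)) (by
        intro k
        have := tailW_le_of_Cle h k
        rw [tailW, tailW, ← coe_sigmaPlus, ← coe_sigmaPlus, Multiset.coe_countP,
          Multiset.coe_countP] at this
        rwa [List.countP_reverse, List.countP_reverse])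
    simpa using this
  · rintro p ⟨h, hne⟩
    have hp : (sigmaPlus (sigmaAb p)).Perm p := by
      rw [← Multiset.coe_eq_coe, coe_sigmaPlus, toMultiset_sigmaAb]
    have hs : sigmaAb (sigmaPlus (sigmaAb p)) = sigmaAb p := by
      rw [← Finsupp.toMultiset_toFinsupp (sigmaAb (sigmaPlus (sigmaAb p))), toMultiset_sigmaAb, coe_sigmaPlus, Finsupp.toMultiset_toFinsupp]
    rcases h (liftOrder baseOrder) with h | h | h
    · exact hne h
    · rw [hs] at h
      exact baseOrder.irrefl _ h
    · exact sorted_not_gt (sigmaPlus_sorted _) hp h.2
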